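/- For the weighted directed cycle digraph with all weights positive, let Q₂ be the n×n real matrix whose first n−1 columns are the columns of Rᵀ and whose last column is the vector (1/w 0, 1/w 1, …, 1/w (n−1)) (i.e., W⁻¹ * 1ₙ). Then Q₂ is invertible and Q₂⁻¹ * Le * Q₂ equals the block-diagonal matrix diag(Eτᵀ * W * Rᵀ, 0), i.e., the n×n matrix whose upper-left (n−1)×(n−1) block is Eτᵀ * W * Rᵀ and all of whose remaining entries are zero. -/

import Mathlib

open Matrix

lemma cyc_aux (m : ℕ) (hm : 1 ≤ m) (w : Fin (m+1) → ℝ) (hw : ∀ i, 0 < w i)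
    (E : Matrix (Fin (m+1)) (Fin (m+1)) ℝ)
    (hE : ∀ v i, E v i = if v = i then 1 else if v = i + 1 then -1 else 0)
    (W Le : Matrix (Fin (m+1)) (Fin (m+1)) ℝ) (hW : W = Matrix.diagonal w) (hLe : Le = Eᵀ * W)
    (Eτ : Matrix (Fin (m+1)) (Fin m) ℝ)
    (hEτ : ∀ v i, Eτ v i = E v i.castSucc)
    (Ec : Matrix (Fin (m+1)) (Fin 1) ℝ)
    (hEc : ∀ v i, Ec v i = E v (Fin.last m))
    (Tτ : Matrix (Fin m) (Fin 1) ℝ)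
    (hTτ : Tτ = (Eτᵀ * Eτ)⁻¹ * Eτᵀ * Ec)
    (R : Matrix (Fin m) (Fin (m+1)) ℝ)
    (hR : ∀ (i : Fin m) (j : Fin (m+1)), R i j =
      if h : j.val < m then (if i.val = j.val then 1 else 0) else Tτ i 0)
    (Q₂ : Matrix (Fin (m+1)) (Fin (m+1)) ℝ)
    (hQ₂ : ∀ (i j : Fin (m+1)), Q₂ i j =
      if h : j.val < m then Rᵀ i ⟨j.val, h⟩ else 1 / w i) :
    IsUnit Q₂ ∧
    ∀ (i j : Fin (m+1)), (Q₂⁻¹ * Le * Q₂) i j =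
      if hi : i.val < m then
        (if hj : j.val < m then (Eτᵀ * W * Rᵀ) ⟨i.val, hi⟩ ⟨j.val, hj⟩ else 0)
      else 0 := by
  have hne : ∀ i : Fin (m+1), i ≠ i + 1 := by
    intro i h
    have h1 : (1 : Fin (m+1)) = 0 := by simpa using h.symm
    have h2 := congrArg Fin.val h1
    rw [Fin.val_one'] at h2
    rw [Nat.mod_eq_of_lt (by omega)] at h2
    simp at h2
  have hE' : ∀ v i, E v i = (if v = i then 1 else 0) - (if v = i + 1 then 1 else 0) := by
    intro v i
    rw [hE]
    by_cases h : v = i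
    · subst h; simp [hne v]
    · simp only [h, if_false]; split_ifs <;> simp
  have hmul : ∀ y : Fin (m+1) → ℝ, ∀ v, ∑ i, E v i * y i = y v - y (v - 1) := by
    intro y v
    have : ∀ i, (v = i + 1) ↔ (v - 1 = i) := fun i => sub_eq_iff_eq_add.symm
    simp [hE', sub_mul, Finset.sum_sub_distrib, this]
  have hrow : ∀ v, ∑ i, E v i = 0 := by
    intro v; simpa using hmul (fun _ => 1) v
  have hcol : ∀ i, ∑ v, E v i = 0 := by
    intro i; simp [hE', Finset.sum_sub_distrib]
  have hinj : ∀ x : Fin m → ℝ, Eτ *ᵥ x = 0 → x = 0 := by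
    intro x hx
    have hy : ∀ v, (Fin.snoc x 0 : Fin (m+1) → ℝ) v = (Fin.snoc x 0 : Fin (m+1) → ℝ) (v-1) := by
      intro v
      have h1 := hmul (Fin.snoc x 0) v
      have h2 := congrFun hx v
      rw [Fin.sum_univ_castSucc] at h1
      simp only [Matrix.mulVec, dotProduct, hEτ, Pi.zero_apply] at h2
      simp only [Fin.snoc_castSucc, Fin.snoc_last, h2] at h1
      linarith
    have hz : ∀ v, (Fin.snoc x 0 : Fin (m+1) → ℝ) v = 0 := by
      intro v
      induction v using Fin.induction with
      | zero =>
        rw [hy]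
        have : (0 : Fin (m+1)) - 1 = Fin.last m := by
          rw [sub_eq_iff_eq_add]; simp
        rw [this]; simp
      | succ i ih =>
        have h3 : i.succ - 1 = i.castSucc := by
          rw [sub_eq_iff_eq_add, Fin.coeSucc_eq_succ]
        rw [hy, h3]
        exact ih
    funext i
    simpa using hz i.castSucc
  have hG : IsUnit (Eτᵀ * Eτ) := by
    rw [← Matrix.mulVec_injective_iff_isUnit]
    intro x y hxy
    have h0 : (Eτᵀ * Eτ) *ᵥ (x - y) = 0 := by
      rw [Matrix.mulVec_sub]; exact sub_eq_zero.2 hxy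
    have h1 : (Eτᴴ * Eτ) *ᵥ (x - y) = 0 := by
      rw [Matrix.conjTranspose_eq_transpose_of_trivial]; exact h0
    rw [Matrix.conjTranspose_mul_self_mulVec_eq_zero] at h1
    exact sub_eq_zero.1 (hinj _ h1)
  have hT : ∀ i, Tτ i 0 = -1 := by
    have hEc' : Ec = Eτ * (Matrix.of (fun _ _ => (-1 : ℝ)) : Matrix (Fin m) (Fin 1) ℝ) := by
      ext v i
      have h := hrow v
      rw [Fin.sum_univ_castSucc] at h
      simp only [Matrix.mul_apply, hEc, hEτ, Matrix.of_apply, ← Finset.sum_mul]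
      linarith
    have : Tτ = Matrix.of fun _ _ => (-1 : ℝ) := by
      rw [hTτ, hEc', Matrix.mul_assoc, ← Matrix.mul_assoc Eτᵀ, ← Matrix.mul_assoc,
        Matrix.nonsing_inv_mul _ ((Matrix.isUnit_iff_isUnit_det _).1 hG), Matrix.one_mul]
    intro i; simp [this]
  have hR1 : ∀ i j, R i (Fin.castSucc j) = if i = j then 1 else 0 := by
    intro i j; simp [hR, Fin.ext_iff]
  have hR2 : ∀ i, R i (Fin.last m) = -1 := by
    intro i; simp [hR, hT]
  have hQ1 : ∀ i j, Q₂ i (Fin.castSucc j) = R j i := by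
    intro i j; simp [hQ₂]
  have hQ2 : ∀ i, Q₂ i (Fin.last m) = 1 / w i := by
    intro i; simp [hQ₂]
  have hER : Eᵀ = Rᵀ * Eτᵀ := by
    rw [← Matrix.transpose_mul]; congr 1
    ext v j
    rw [Matrix.mul_apply]
    induction j using Fin.lastCases with
    | last =>
      have h := hrow v
      rw [Fin.sum_univ_castSucc] at h
      simp only [hR2, hEτ, ← Finset.sum_mul]; linarith
    | cast j => simp [hR1, hEτ]
  have hQu : IsUnit Q₂ := by
    rw [← Matrix.mulVec_injective_iff_isUnit]
    intro x y hxy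
    have h0 : Q₂ *ᵥ (x - y) = 0 := by
      rw [Matrix.mulVec_sub]; exact sub_eq_zero.2 hxy
    apply sub_eq_zero.1
    generalize x - y = z at h0
    have ha : ∀ i : Fin m, z i.castSucc = - (z (Fin.last m) * (1 / w i.castSucc)) := by
      intro i
      have h := congrFun h0 i.castSucc
      simp only [Matrix.mulVec, dotProduct, Fin.sum_univ_castSucc, hQ1, hQ2, hR1] at h
      simp at h
      rw [one_div]; linarith
    have hb : z (Fin.last m) * ∑ i, 1 / w i = 0 := by
      have h := congrFun h0 (Fin.last m)
      simp only [Matrix.mulVec, dotProduct, Fin.sum_univ_castSucc, hQ1, hQ2, hR2, ha, neg_mul_neg,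
        one_mul, ← Finset.mul_sum, Pi.zero_apply] at h
      rw [Fin.sum_univ_castSucc]; linarith
    have hs : 0 < ∑ i, 1 / w i :=
      Finset.sum_pos (fun i _ => one_div_pos.2 (hw i)) Finset.univ_nonempty
    have hl : z (Fin.last m) = 0 := (mul_eq_zero.1 hb).resolve_right hs.ne'
    funext i
    induction i using Fin.lastCases with
    | last => exact hl
    | cast j => simp [ha, hl]
  refine ⟨hQu, ?_⟩
  set D : Matrix (Fin (m+1)) (Fin (m+1)) ℝ := Matrix.of fun i j => if hi : i.val < m then
        (if hj : j.val < m then (Eτᵀ * W * Rᵀ) ⟨i.val, hi⟩ ⟨j.val, hj⟩ else 0)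
      else 0 with hD
  have key : Le * Q₂ = Q₂ * D := by
    ext i j
    induction j using Fin.lastCases with
    | last =>
      have : (Q₂ * D) i (Fin.last m) = 0 := by simp [Matrix.mul_apply, hD]
      rw [this, hLe, hW, Matrix.mul_apply]
      simp only [Matrix.mul_diagonal, hQ2, Matrix.transpose_apply]
      rw [← hcol i]
      refine Finset.sum_congr rfl fun k _ => ?_
      have := (hw k).ne'
      field_simp
    | cast j =>
      have h1 : (Le * Q₂) i j.castSucc = (Le * Rᵀ) i j := by
        simp [Matrix.mul_apply, hQ1]
      have h2 : (Q₂ * D) i j.castSucc = (Rᵀ * (Eτᵀ * W * Rᵀ)) i j := by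
        rw [Matrix.mul_apply, Matrix.mul_apply, Fin.sum_univ_castSucc]
        simp [hD, hQ1]
      rw [h1, h2, hLe, hER]
      simp only [Matrix.mul_assoc]
  intro i j
  rw [Matrix.mul_assoc, key, ← Matrix.mul_assoc,
    Matrix.nonsing_inv_mul _ ((Matrix.isUnit_iff_isUnit_det _).1 hQu), Matrix.one_mul]
  rfl

/-- For the weighted directed cycle digraph with positive weights, the
edge Laplacian `Le = Eᵀ * A * W` is similar, via the matrix `Q₂` with columns `Rᵀ` and
`W⁻¹ 1ₙ`, to the block diagonal matrix `diag(Eτᵀ * W * Rᵀ, 0)`. -/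
theorem cycle_edgeLaplacian_similar_block_diagonal
    (n : ℕ) (hn : 2 ≤ n) (w : Fin n → ℝ) (hw : ∀ i, 0 < w i)
    (E : Matrix (Fin n) (Fin n) ℝ)
    (hE : ∀ v i, E v i = if v = i then 1 else if v = i + ⟨1, by omega⟩ then -1 else 0)
    (A : Matrix (Fin n) (Fin n) ℝ) (hA : A = 1)
    (W : Matrix (Fin n) (Fin n) ℝ) (hW : W = Matrix.diagonal w)
    (Le : Matrix (Fin n) (Fin n) ℝ) (hLe : Le = Eᵀ * A * W)
    (Eτ : Matrix (Fin n) (Fin (n - 1)) ℝ)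
    (hEτ : Eτ = E.submatrix id
      (fun i : Fin (n - 1) => ⟨i.val, lt_of_lt_of_le i.2 (Nat.sub_le n 1)⟩))
    (Ec : Matrix (Fin n) (Fin 1) ℝ)
    (hEc : Ec = E.submatrix id (fun _ => ⟨n - 1, by omega⟩))
    (Tτ : Matrix (Fin (n - 1)) (Fin 1) ℝ)
    (hTτ : Tτ = (Eτᵀ * Eτ)⁻¹ * Eτᵀ * Ec)
    (R : Matrix (Fin (n - 1)) (Fin n) ℝ)
    (hR : ∀ (i : Fin (n - 1)) (j : Fin n), R i j =
      if h : j.val < n - 1 then (if i.val = j.val then 1 else 0) else Tτ i 0)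
    (Q₂ : Matrix (Fin n) (Fin n) ℝ)
    (hQ₂ : ∀ (i j : Fin n), Q₂ i j =
      if h : j.val < n - 1 then Rᵀ i ⟨j.val, h⟩ else 1 / w i) :
    IsUnit Q₂ ∧
    ∀ (i j : Fin n), (Q₂⁻¹ * Le * Q₂) i j =
      if hi : i.val < n - 1 then
        (if hj : j.val < n - 1 then (Eτᵀ * W * Rᵀ) ⟨i.val, hi⟩ ⟨j.val, hj⟩ else 0)
      else 0 := by
  obtain ⟨m, rfl⟩ : ∃ m, n = m + 1 := ⟨n - 1, by omega⟩
  have h1 : (⟨1, by omega⟩ : Fin (m + 1)) = 1 := by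
    apply Fin.ext
    rw [Fin.val_one', Nat.mod_eq_of_lt (by omega)]
  refine cyc_aux m (by omega) w hw E ?_ W Le hW ?_ Eτ ?_ Ec ?_ Tτ hTτ R hR Q₂ hQ₂
  · intro v i
    rw [hE, h1]
  · rw [hLe, hA, Matrix.mul_one]
  · intro v i; rw [hEτ]; rfl
  · intro v i; rw [hEc]; rfl
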